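/- arXiv:1702.00709 — 3 statements merged into one kernel-verified Lean document; each statement's English description precedes it below -/
import Mathlib

section
/- Consider the IQN setup and iteration, and assume additionally x^t ≠ x* for all t. There exist positive constants ε and δ such that: if ‖x⁰ − x*‖ < ε and ‖B_i⁰ − ∇²f_i(x*)‖_{M_i} < δ for M_i = ∇²f_i(x*)^{−1/2} and every i = 1,…,n, then there exists a sequence of positive reals (ζ^t)_{t≥0} such that ‖x^t − x*‖ ≤ ζ^t for all t ≥ 0 and lim_{t→∞} ζ^{t+1}/ζ^t = 0; i.e., the residual sequence converges to zero R-superlinearly. -/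
open Matrix Filter RealInnerProductSpace

noncomputable section

abbrev Vec (p : ℕ) := EuclideanSpace ℝ (Fin p)
abbrev Mat (p : ℕ) := Matrix (Fin p) (Fin p) ℝ

/-- A matrix acting on Euclidean space as a linear map. -/
def applyM {p : ℕ} (A : Mat p) (v : Vec p) : Vec p := Matrix.toEuclideanCLM (𝕜 := ℝ) A v

/-- Operator norm of a matrix induced by the Euclidean vector norm. -/
def opNorm {p : ℕ} (A : Mat p) : ℝ := ‖Matrix.toEuclideanCLM (𝕜 := ℝ) A‖

/-- Frobenius norm of a matrix. -/
def frobNorm {p : ℕ} (A : Mat p) : ℝ := Real.sqrt (∑ i, ∑ j, (A i j)^2)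

/-- Weighted matrix norm ‖A‖_M = ‖M A M‖_F. -/
def wNorm {p : ℕ} (M A : Mat p) : ℝ := frobNorm (M * A * M)

/-- Underlying function of a Euclidean vector. -/
def toFn {p : ℕ} (v : Vec p) : Fin p → ℝ := (WithLp.equiv 2 (Fin p → ℝ)) v

/-- Outer product a bᵀ. -/
def outer {p : ℕ} (a b : Vec p) : Mat p := Matrix.vecMulVec (toFn a) (toFn b)

/-- Bilinear form uᵀ B v. -/
def quadForm {p : ℕ} (B : Mat p) (u v : Vec p) : ℝ := toFn u ⬝ᵥ B.mulVec (toFn v)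

/-- Dot product aᵀ b. -/
def dotV {p : ℕ} (a b : Vec p) : ℝ := toFn a ⬝ᵥ toFn b

/-- The BFGS update  B⁺ = B + yyᵀ/(yᵀs) − B s sᵀ B/(sᵀ B s). -/
def bfgsUpdate {p : ℕ} (B : Mat p) (s y : Vec p) : Mat p :=
  B + (dotV y s)⁻¹ • outer y y - (quadForm B s s)⁻¹ • (B * outer s s * B)

/-- `H` is the Hessian (matrix of second derivatives) of `g`. -/
def HasHessian {p : ℕ} (g : Vec p → ℝ) (H : Vec p → Mat p) : Prop :=
  ∀ x, HasFDerivAt (gradient g) (Matrix.toEuclideanCLM (𝕜 := ℝ) (H x) : Vec p →L[ℝ] Vec p) x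

/-- The cyclic index `i_t = (t mod n) + 1` (0-indexed: `t mod n`). -/
def cyc {n : ℕ} (hn : 1 ≤ n) (t : ℕ) : Fin n := ⟨t % n, Nat.mod_lt t hn⟩

/-- The IQN problem data: `n` twice continuously differentiable sample functions
`f i : ℝ^p → ℝ`, `μ`-strongly convex with `L`-Lipschitz gradients and `L̃`-Lipschitz
Hessians, and the optimizer `x*` of `f = (1/n) Σ f i`. -/
structure IQNProblem (p n : ℕ) where
  hp : 1 ≤ p
  hn : 1 ≤ n
  f : Fin n → Vec p → ℝ
  Hess : Fin n → Vec p → Mat p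
  mu : ℝ
  Lg : ℝ
  Ltil : ℝ
  xstar : Vec p
  hmu : 0 < mu
  hmuL : mu ≤ Lg
  hLtil : 0 < Ltil
  hC2 : ∀ i, ContDiff ℝ 2 (f i)
  hHess : ∀ i, HasHessian (f i) (Hess i)
  hlow : ∀ i, ∀ x xh : Vec p,
    mu * ‖x - xh‖^2 ≤ ⟪gradient (f i) x - gradient (f i) xh, x - xh⟫
  hup : ∀ i, ∀ x xh : Vec p,
    ⟪gradient (f i) x - gradient (f i) xh, x - xh⟫ ≤ Lg * ‖x - xh‖^2
  hLip : ∀ i, ∀ u v : Vec p, opNorm (Hess i u - Hess i v) ≤ Ltil * ‖u - v‖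
  hopt : gradient (fun x => (n : ℝ)⁻¹ * ∑ i, f i x) xstar = 0
  hmin : ∀ x : Vec p, (n : ℝ)⁻¹ * ∑ i, f i xstar ≤ (n : ℝ)⁻¹ * ∑ i, f i x

/-- A run of the IQN iteration: sequences `x^t`, `z_i^t` and symmetric matrices `B_i^t`
following the IQN update with cyclic index, all steps assumed well defined. -/
structure IQNState {p n : ℕ} (P : IQNProblem p n) where
  x : ℕ → Vec p
  z : Fin n → ℕ → Vec p
  B : Fin n → ℕ → Mat p
  hz0 : ∀ i, z i 0 = x 0
  hsym : ∀ i t, (B i t).IsSymm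
  hinv : ∀ t, IsUnit ((n : ℝ)⁻¹ • ∑ i, B i t)
  hx : ∀ t, x (t+1) = applyM ((n : ℝ)⁻¹ • ∑ i, B i t)⁻¹
      ((n : ℝ)⁻¹ • ∑ i, applyM (B i t) (z i t) - (n : ℝ)⁻¹ • ∑ i, gradient (P.f i) (z i t))
  hzupd : ∀ t, z (cyc P.hn t) (t+1) = x (t+1)
  hzfix : ∀ t, ∀ j, j ≠ cyc P.hn t → z j (t+1) = z j t
  hs : ∀ t, z (cyc P.hn t) (t+1) - z (cyc P.hn t) t ≠ 0
  hys : ∀ t, dotV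
      (gradient (P.f (cyc P.hn t)) (z (cyc P.hn t) (t+1)) -
        gradient (P.f (cyc P.hn t)) (z (cyc P.hn t) t))
      (z (cyc P.hn t) (t+1) - z (cyc P.hn t) t) ≠ 0
  hsBs : ∀ t, quadForm (B (cyc P.hn t) t)
      (z (cyc P.hn t) (t+1) - z (cyc P.hn t) t)
      (z (cyc P.hn t) (t+1) - z (cyc P.hn t) t) ≠ 0
  hBupd : ∀ t, B (cyc P.hn t) (t+1) = bfgsUpdate (B (cyc P.hn t) t)
      (z (cyc P.hn t) (t+1) - z (cyc P.hn t) t)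
      (gradient (P.f (cyc P.hn t)) (z (cyc P.hn t) (t+1)) -
        gradient (P.f (cyc P.hn t)) (z (cyc P.hn t) t))
  hBfix : ∀ t, ∀ j, j ≠ cyc P.hn t → B j (t+1) = B j t

/-!
In the variables scaled by `M_i`, a BFGS step with the exact secant pair `y = s` decreases the
squared Frobenius distance to the identity by a multiple of the squared Dennis–Moré quotient, and
the error in the secant equation adds a term linear in the distance of the iterates to `x*`. While
the residuals decay geometrically these terms are summable, so the matrices stay close to the
Hessians, which in turn keeps the decay going; telescoping, the Dennis–Moré quotients tend to `0`.

Each `z_i^t` is one of the last `n` iterates, so the suprema `U t` of the tails of the residuals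
satisfy `U (t + n) ≤ ω t * U t` with `ω → 0`. Spreading `ω` over `n` consecutive steps by `n`-th
roots gives `ζ`.
-/

/-- R-superlinear convergence to zero of a real sequence: domination by a positive sequence whose
successive ratios tend to zero. -/
def RSuperlinear (u : ℕ → ℝ) : Prop :=
  ∃ ζ : ℕ → ℝ, (∀ t, 0 < ζ t) ∧ (∀ t, u t ≤ ζ t) ∧
    Tendsto (fun t : ℕ => ζ (t + 1) / ζ t) atTop (nhds 0)

/-- The supremum of the tail of `u` from index `t` on. It is only meaningful when `u` is bounded
above, since the supremum of an unbounded set of reals is `0` by convention. -/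
def tailSup (u : ℕ → ℝ) (t : ℕ) : ℝ := ⨆ k, u (t + k)

section TailSup

variable {u : ℕ → ℝ}

theorem tailSup_le {t : ℕ} {b : ℝ} (h : ∀ s, t ≤ s → u s ≤ b) : tailSup u t ≤ b :=
  ciSup_le fun _ => h _ (Nat.le_add_right _ _)

theorem le_tailSup (h : BddAbove (Set.range u)) {s t : ℕ} (hts : t ≤ s) : u s ≤ tailSup u t := by
  obtain ⟨k, rfl⟩ := Nat.exists_eq_add_of_le hts
  exact le_ciSup (h.mono (Set.range_comp_subset_range (t + ·) u)) k

theorem tailSup_antitone (h : BddAbove (Set.range u)) : Antitone (tailSup u) :=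
  fun _ _ hst => tailSup_le fun _ hr => le_tailSup h (hst.trans hr)

theorem tailSup_nonneg (hu : ∀ t, 0 ≤ u t) (t : ℕ) : 0 ≤ tailSup u t :=
  Real.iSup_nonneg fun _ => hu _

theorem tendsto_tailSup (hu : ∀ t, 0 ≤ u t) (h : Tendsto u atTop (nhds 0)) :
    Tendsto (tailSup u) atTop (nhds 0) := by
  refine tendsto_order.2 ⟨fun b hb => .of_forall fun t => hb.trans_le (tailSup_nonneg hu t),
    fun b hb => ?_⟩
  obtain ⟨c, hc0, hcb⟩ := exists_between hb
  obtain ⟨N, hN⟩ := eventually_atTop.1 (h.eventually_le_const hc0)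
  filter_upwards [eventually_ge_atTop N] with t ht
  exact (tailSup_le fun s hs => hN s (ht.trans hs)).trans_lt hcb

end TailSup

theorem tendsto_zero_of_le_sub_succ {r W : ℕ → ℝ} (hr : ∀ t, 0 ≤ r t) (hW : ∀ t, 0 ≤ W t)
    (h : ∀ t, r t ≤ W t - W (t + 1)) : Tendsto r atTop (nhds 0) := by
  refine (summable_of_sum_range_le (c := W 0) hr fun N => ?_).tendsto_atTop_zero
  calc ∑ t ∈ Finset.range N, r t ≤ ∑ t ∈ Finset.range N, (W t - W (t + 1)) :=
        Finset.sum_le_sum fun t _ => h t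
    _ = W 0 - W N := Finset.sum_range_sub' W N
    _ ≤ W 0 := sub_le_self _ (hW N)

section RSuperlinear

theorem RSuperlinear.mono {u v : ℕ → ℝ} (hv : RSuperlinear v) (huv : ∀ t, u t ≤ v t) :
    RSuperlinear u :=
  let ⟨ζ, hpos, hle, hlim⟩ := hv
  ⟨ζ, hpos, fun t => (huv t).trans (hle t), hlim⟩

theorem exists_antitone_pos_majorant {ω : ℕ → ℝ} (hω : Tendsto ω atTop (nhds 0)) :
    ∃ α : ℕ → ℝ, Antitone α ∧ (∀ t, 0 < α t) ∧ (∀ t, ω t ≤ α t) ∧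
      Tendsto α atTop (nhds 0) := by
  have habs : Tendsto (fun t => |ω t|) atTop (nhds 0) := by simpa using hω.abs
  have hbdd := habs.bddAbove_range
  have htail_nonneg := tailSup_nonneg fun t => abs_nonneg (ω t)
  refine ⟨fun t => tailSup (fun s => |ω s|) t + 1 / ((t : ℝ) + 1), fun s t hst => ?_,
    fun t => ?_, fun t => ?_, ?_⟩
  · exact add_le_add (tailSup_antitone hbdd hst) (Nat.one_div_le_one_div hst)
  · exact add_pos_of_nonneg_of_pos (htail_nonneg t) Nat.one_div_pos_of_nat
  · exact ((le_abs_self _).trans (le_tailSup hbdd le_rfl)).trans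
      (le_add_of_nonneg_right Nat.one_div_pos_of_nat.le)
  · simpa using (tendsto_tailSup (fun t => abs_nonneg (ω t)) habs).add
      (tendsto_one_div_add_atTop_nhds_zero_nat (𝕜 := ℝ))

/-- The factors are `n`-th roots of `ω`, delayed so that all `n` factors following index `t` are at
least `ω t ^ (1 / n)`. -/
theorem exists_pos_tendsto_zero_le_prod {n : ℕ} (hn : 1 ≤ n) {ω : ℕ → ℝ} (hanti : Antitone ω)
    (hpos : ∀ t, 0 < ω t) (hω : Tendsto ω atTop (nhds 0)) :
    ∃ a : ℕ → ℝ, (∀ t, 0 < a t) ∧ Tendsto a atTop (nhds 0) ∧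
      ∀ t, ω t ≤ ∏ k ∈ Finset.range n, a (t + k) := by
  have hn' : (0 : ℝ) < (n : ℝ)⁻¹ := by positivity
  refine ⟨fun s => ω (s + 1 - n) ^ (n : ℝ)⁻¹, fun s => Real.rpow_pos_of_pos (hpos _) _, ?_,
    fun t => ?_⟩
  · have hshift : Tendsto (fun s : ℕ => s + 1 - n) atTop atTop :=
      (tendsto_sub_atTop_nat n).comp (tendsto_add_atTop_nat 1)
    simpa only [Function.comp_def, Real.zero_rpow hn'.ne'] using
      (hω.comp hshift).rpow_const (p := (n : ℝ)⁻¹) (Or.inr hn'.le)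
  · calc ω t = (ω t ^ (n : ℝ)⁻¹) ^ n := (Real.rpow_inv_natCast_pow (hpos t).le (by omega)).symm
      _ = ∏ _k ∈ Finset.range n, ω t ^ (n : ℝ)⁻¹ := by rw [Finset.prod_const, Finset.card_range]
      _ ≤ ∏ k ∈ Finset.range n, ω (t + k + 1 - n) ^ (n : ℝ)⁻¹ := by
        refine Finset.prod_le_prod (fun _ _ => (Real.rpow_pos_of_pos (hpos t) _).le) fun k hk => ?_
        have hk : k < n := Finset.mem_range.1 hk
        exact Real.rpow_le_rpow (hpos t).le (hanti (by omega)) hn'.le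

theorem rSuperlinear_of_add_le_prod_mul {n : ℕ} (hn : 1 ≤ n) {u a : ℕ → ℝ} (hu : ∀ t, 0 ≤ u t)
    (ha : ∀ t, 0 < a t) (hlim : Tendsto a atTop (nhds 0))
    (h : ∀ t, u (t + n) ≤ (∏ k ∈ Finset.range n, a (t + k)) * u t) : RSuperlinear u := by
  set π : ℕ → ℝ := fun t => ∏ s ∈ Finset.range t, a s with hπ
  have hπ_pos : ∀ t, 0 < π t := fun t => Finset.prod_pos fun s _ => ha s
  obtain ⟨C, hC, hinit⟩ : ∃ C > 0, ∀ t < n, u t ≤ C * π t := by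
    have hterm : ∀ s, 0 ≤ u s / π s := fun s => div_nonneg (hu s) (hπ_pos s).le
    refine ⟨∑ s ∈ Finset.range n, u s / π s + 1,
      add_pos_of_nonneg_of_pos (Finset.sum_nonneg fun s _ => hterm s) one_pos, fun t ht => ?_⟩
    rw [← div_le_iff₀ (hπ_pos t)]
    exact (Finset.single_le_sum (fun s _ => hterm s) (Finset.mem_range.2 ht)).trans
      (le_add_of_nonneg_right zero_le_one)
  refine ⟨fun t => C * π t, fun t => mul_pos hC (hπ_pos t), fun t => ?_, ?_⟩
  · induction t using Nat.strong_induction_on with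
    | _ t ih =>
      rcases lt_or_ge t n with ht | ht
      · exact hinit t ht
      · obtain ⟨k, rfl⟩ := Nat.exists_eq_add_of_le' ht
        calc u (k + n) ≤ (∏ j ∈ Finset.range n, a (k + j)) * u k := h k
          _ ≤ (∏ j ∈ Finset.range n, a (k + j)) * (C * π k) :=
            mul_le_mul_of_nonneg_left (ih k (by omega)) (Finset.prod_nonneg fun _ _ => (ha _).le)
          _ = C * π (k + n) := by rw [hπ]; simp only [Finset.prod_range_add]; ring
  · refine hlim.congr fun t => ?_
    have hsucc : π (t + 1) = π t * a t := Finset.prod_range_succ a t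
    rw [mul_div_mul_left _ _ hC.ne', hsucc, mul_div_cancel_left₀ _ (hπ_pos t).ne']

theorem rSuperlinear_of_add_le_mul {n : ℕ} (hn : 1 ≤ n) {u ω : ℕ → ℝ} (hu : ∀ t, 0 ≤ u t)
    (hω : Tendsto ω atTop (nhds 0)) (h : ∀ t, u (t + n) ≤ ω t * u t) : RSuperlinear u := by
  obtain ⟨α, hanti, hpos, hωα, hα⟩ := exists_antitone_pos_majorant hω
  obtain ⟨a, ha, hlim, hαa⟩ := exists_pos_tendsto_zero_le_prod hn hanti hpos hα
  exact rSuperlinear_of_add_le_prod_mul hn hu ha hlim fun t =>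
    (h t).trans (mul_le_mul_of_nonneg_right ((hωα t).trans (hαa t)) (hu t))

theorem rSuperlinear_of_le_tailSup {n : ℕ} (hn : 1 ≤ n) {u ω : ℕ → ℝ} {c : ℝ} (hc : c < 1)
    (hu : ∀ t, 0 ≤ u t) (hbdd : BddAbove (Set.range u)) (hω : Tendsto ω atTop (nhds 0))
    (h : ∀ m s, m + n ≤ s → u s ≤ ω m * tailSup u m + c * tailSup u (m + n)) :
    RSuperlinear u := by
  have hlim : Tendsto (fun t => ω t / (1 - c)) atTop (nhds 0) := by
    simpa using hω.div_const (1 - c)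
  have hU : RSuperlinear (tailSup u) :=
    rSuperlinear_of_add_le_mul hn (tailSup_nonneg hu) hlim fun m => by
      have hm : tailSup u (m + n) ≤ ω m * tailSup u m + c * tailSup u (m + n) :=
        tailSup_le fun s hs => h m s hs
      rw [div_mul_eq_mul_div, le_div_iff₀ (sub_pos.2 hc)]
      linarith
  exact hU.mono fun t => le_tailSup hbdd le_rfl

end RSuperlinear

section Cyclic

variable {n : ℕ} (hn : 1 ≤ n)

theorem exists_cyc_eq (i : Fin n) (t : ℕ) : ∃ s, t ≤ s ∧ s < t + n ∧ cyc hn s = i := by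
  have hmod : ∀ q, cyc hn (n * q + i) = i := fun q =>
    Fin.ext (by simp [cyc, Nat.mod_eq_of_lt i.2])
  have hdiv := Nat.div_add_mod t n
  have hlt : t % n < n := Nat.mod_lt t hn
  have hi := i.2
  rcases le_or_gt (t % n) i with h | h
  · exact ⟨n * (t / n) + i, by omega, by omega, hmod _⟩
  · exact ⟨n * (t / n + 1) + i, by rw [Nat.mul_add]; omega, by rw [Nat.mul_add]; omega, hmod _⟩

theorem exists_first_cyc_eq (i : Fin n) (t : ℕ) :
    ∃ s, t ≤ s ∧ cyc hn s = i ∧ ∀ r, t ≤ r → r < s → i ≠ cyc hn r := by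
  have hex : ∃ s, t ≤ s ∧ cyc hn s = i :=
    let ⟨s, hts, _, hs⟩ := exists_cyc_eq hn i t
    ⟨s, hts, hs⟩
  classical
  refine ⟨Nat.find hex, (Nat.find_spec hex).1, (Nat.find_spec hex).2, fun r htr hrs hr => ?_⟩
  exact Nat.find_min hex hrs ⟨htr, hr.symm⟩

variable {α : Type*} {g : Fin n → ℕ → α}

theorem eq_of_forall_ne_cyc (hfix : ∀ t j, j ≠ cyc hn t → g j (t + 1) = g j t) {i : Fin n}
    {s t : ℕ} (hts : t ≤ s) (hne : ∀ r, t ≤ r → r < s → i ≠ cyc hn r) : g i s = g i t := by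
  induction s, hts using Nat.le_induction with
  | base => rfl
  | succ s hts ih =>
    rw [hfix s i (hne s hts s.lt_succ_self), ih fun r htr hrs => hne r htr (by omega)]

theorem exists_eq_of_cyc_update {x : ℕ → α} (h0 : ∀ i, g i 0 = x 0)
    (hupd : ∀ t, g (cyc hn t) (t + 1) = x (t + 1))
    (hfix : ∀ t j, j ≠ cyc hn t → g j (t + 1) = g j t) (i : Fin n) (t : ℕ) :
    ∃ τ, τ ≤ t ∧ t < τ + n ∧ g i t = x τ := by
  have hlast : ∃ τ, τ ≤ t ∧ g i t = x τ ∧ ∀ r, τ ≤ r → r < t → i ≠ cyc hn r := by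
    induction t with
    | zero => exact ⟨0, le_rfl, h0 i, fun r _ hr => absurd hr (Nat.not_lt_zero r)⟩
    | succ t ih =>
      rcases eq_or_ne i (cyc hn t) with rfl | hi
      · exact ⟨t + 1, le_rfl, hupd t, fun r hr hr' => absurd hr (Nat.not_le.2 hr')⟩
      · obtain ⟨τ, hτ, heq, hne⟩ := ih
        refine ⟨τ, by omega, by rw [hfix t i hi, heq], fun r hτr hrt => ?_⟩
        rcases (Nat.lt_succ_iff.1 hrt).eq_or_lt with rfl | hrt
        · exact hi
        · exact hne r hτr hrt
  obtain ⟨τ, hτ, heq, hne⟩ := hlast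
  obtain ⟨s, hτs, hsn, hs⟩ := exists_cyc_eq hn i τ
  have hts : t ≤ s := not_lt.1 fun hst => hne s hτs hst hs.symm
  exact ⟨τ, hτ, by omega, heq⟩

end Cyclic

section Matrix

variable {p : ℕ}

theorem applyM_sub_left (A B : Mat p) (v : Vec p) :
    applyM (A - B) v = applyM A v - applyM B v := by
  simp only [applyM, map_sub, _root_.sub_apply]

theorem applyM_sub (A : Mat p) (u v : Vec p) : applyM A (u - v) = applyM A u - applyM A v :=
  map_sub _ u v

theorem applyM_smul (A : Mat p) (c : ℝ) (v : Vec p) : applyM A (c • v) = c • applyM A v :=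
  map_smul _ c v

theorem applyM_mul (A B : Mat p) (v : Vec p) : applyM (A * B) v = applyM A (applyM B v) := by
  simp only [applyM, map_mul, mul_apply_eq_comp]

theorem applyM_one (v : Vec p) : applyM (1 : Mat p) v = v := by
  simp only [applyM, map_one, one_apply_eq_self]

theorem norm_applyM_le_opNorm (A : Mat p) (v : Vec p) : ‖applyM A v‖ ≤ opNorm A * ‖v‖ :=
  ContinuousLinearMap.le_opNorm _ v

theorem toFn_applyM (A : Mat p) (v : Vec p) : toFn (applyM A v) = A *ᵥ toFn v :=
  ofLp_toEuclideanCLM A v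

theorem dotV_eq_inner (a b : Vec p) : dotV a b = ⟪a, b⟫ := by
  rw [EuclideanSpace.inner_eq_star_dotProduct, star_trivial, dotProduct_comm]
  rfl

theorem quadForm_eq_inner (B : Mat p) (u v : Vec p) : quadForm B u v = ⟪u, applyM B v⟫ := by
  rw [quadForm, ← toFn_applyM, ← dotV, dotV_eq_inner]

theorem inner_applyM_left {A : Mat p} (hA : A.IsSymm) (u v : Vec p) :
    ⟪applyM A u, v⟫ = ⟪u, applyM A v⟫ := by
  rw [← dotV_eq_inner, ← dotV_eq_inner, dotV, dotV, toFn_applyM, toFn_applyM,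
    dotProduct_mulVec, ← mulVec_transpose, hA.eq]

theorem mul_outer (A : Mat p) (a b : Vec p) : A * outer a b = outer (applyM A a) b := by
  rw [outer, mul_vecMulVec, ← toFn_applyM, outer]

theorem outer_mul {A : Mat p} (hA : A.IsSymm) (a b : Vec p) :
    outer a b * A = outer a (applyM A b) := by
  rw [outer, vecMulVec_mul, ← mulVec_transpose, hA.eq, ← toFn_applyM, outer]

theorem outer_add_self (a b : Vec p) :
    outer (a + b) (a + b) = outer a a + (outer a b + outer b a + outer b b) := by
  have htoFn : toFn (a + b) = toFn a + toFn b := rfl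
  simp only [outer, htoFn, add_vecMulVec, vecMulVec_add]
  abel

theorem applyM_outer (a b v : Vec p) : applyM (outer a b) v = ⟪b, v⟫ • a := by
  have h : toFn (applyM (outer a b) v) = toFn (⟪b, v⟫ • a) := by
    rw [toFn_applyM, outer, vecMulVec_mulVec, ← dotV_eq_inner, dotV, op_smul_eq_smul]
    rfl
  exact (WithLp.equiv 2 (Fin p → ℝ)).injective h

/-- A matrix as a Euclidean vector, so that the inner product is the Frobenius one `tr (Aᵀ B)`. -/
def frobVec : Mat p →ₗ[ℝ] EuclideanSpace ℝ (Fin p × Fin p) where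
  toFun A := WithLp.toLp 2 (vec A)
  map_add' _ _ := rfl
  map_smul' _ _ := rfl

theorem inner_frobVec (A B : Mat p) : ⟪frobVec A, frobVec B⟫ = ∑ i, ∑ j, A i j * B i j := by
  change ⟪WithLp.toLp 2 (vec A), WithLp.toLp 2 (vec B)⟫ = _
  rw [Finset.sum_comm]
  simp [PiLp.inner_apply, Fintype.sum_prod_type, mul_comm]

theorem frobNorm_eq_norm (A : Mat p) : frobNorm A = ‖frobVec A‖ := by
  rw [frobNorm, norm_eq_sqrt_real_inner, inner_frobVec]
  simp only [sq]

theorem frobNorm_nonneg (A : Mat p) : 0 ≤ frobNorm A :=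
  Real.sqrt_nonneg _

theorem inner_frobVec_outer (A : Mat p) (u v : Vec p) :
    ⟪frobVec A, frobVec (outer u v)⟫ = ⟪u, applyM A v⟫ := by
  rw [inner_frobVec, ← quadForm_eq_inner, quadForm]
  simp only [dotProduct, mulVec, outer, vecMulVec_apply, Finset.mul_sum]
  exact Finset.sum_congr rfl fun i _ => Finset.sum_congr rfl fun j _ => by ring

theorem inner_frobVec_outer_outer (a b u v : Vec p) :
    ⟪frobVec (outer a b), frobVec (outer u v)⟫ = ⟪a, u⟫ * ⟪b, v⟫ := by
  rw [inner_frobVec_outer, applyM_outer, inner_smul_right, real_inner_comm a u, mul_comm]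

theorem norm_frobVec_outer (a b : Vec p) : ‖frobVec (outer a b)‖ = ‖a‖ * ‖b‖ := by
  rw [← sq_eq_sq₀ (norm_nonneg _) (by positivity), ← real_inner_self_eq_norm_sq,
    inner_frobVec_outer_outer, real_inner_self_eq_norm_sq, real_inner_self_eq_norm_sq, mul_pow]

theorem norm_applyM_le_frobNorm (A : Mat p) (v : Vec p) : ‖applyM A v‖ ≤ frobNorm A * ‖v‖ := by
  rcases eq_or_ne (applyM A v) 0 with h0 | h0
  · rw [h0, norm_zero]
    exact mul_nonneg (frobNorm_nonneg A) (norm_nonneg v)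
  · refine le_of_mul_le_mul_left ?_ (norm_pos_iff.2 h0)
    calc ‖applyM A v‖ * ‖applyM A v‖ = ⟪frobVec A, frobVec (outer (applyM A v) v)⟫ := by
          rw [inner_frobVec_outer, real_inner_self_eq_norm_mul_norm]
      _ ≤ ‖frobVec A‖ * (‖applyM A v‖ * ‖v‖) := by
          rw [← norm_frobVec_outer]; exact real_inner_le_norm _ _
      _ = ‖applyM A v‖ * (frobNorm A * ‖v‖) := by rw [frobNorm_eq_norm]; ring

theorem abs_inner_applyM_sub_sq_le {B : Mat p} {r : ℝ} (hB : frobNorm (B - 1) ≤ r) (v : Vec p) :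
    |⟪v, applyM B v⟫ - ‖v‖ ^ 2| ≤ r * ‖v‖ ^ 2 := by
  have hnorm : ‖applyM (B - 1) v‖ ≤ r * ‖v‖ :=
    (norm_applyM_le_frobNorm _ v).trans (mul_le_mul_of_nonneg_right hB (norm_nonneg v))
  calc |⟪v, applyM B v⟫ - ‖v‖ ^ 2| = |⟪v, applyM (B - 1) v⟫| := by
        rw [applyM_sub_left, applyM_one, inner_sub_right, real_inner_self_eq_norm_sq]
    _ ≤ ‖v‖ * ‖applyM (B - 1) v‖ := abs_real_inner_le_norm _ _
    _ ≤ ‖v‖ * (r * ‖v‖) := mul_le_mul_of_nonneg_left hnorm (norm_nonneg v)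
    _ = r * ‖v‖ ^ 2 := by ring

end Matrix

section BFGS

variable {p : ℕ}

theorem bfgsUpdate_eq {B : Mat p} (hB : B.IsSymm) (s y : Vec p) :
    bfgsUpdate B s y = B + ⟪y, s⟫⁻¹ • outer y y -
      ⟪s, applyM B s⟫⁻¹ • outer (applyM B s) (applyM B s) := by
  rw [bfgsUpdate, dotV_eq_inner, quadForm_eq_inner, mul_outer, outer_mul hB]

theorem mul_bfgsUpdate_mul {M : Mat p} (hM : M.IsSymm) (B : Mat p) (s y : Vec p) :
    M * bfgsUpdate B (applyM M s) y * M = bfgsUpdate (M * B * M) s (applyM M y) := by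
  have houter : ∀ v, outer (applyM M v) (applyM M v) = M * outer v v * M := fun v => by
    rw [mul_outer, outer_mul hM]
  have hdot : dotV (applyM M y) s = dotV y (applyM M s) := by
    rw [dotV_eq_inner, dotV_eq_inner, inner_applyM_left hM]
  have hquad : quadForm (M * B * M) s s = quadForm B (applyM M s) (applyM M s) := by
    rw [quadForm_eq_inner, quadForm_eq_inner, applyM_mul, applyM_mul, inner_applyM_left hM]
  rw [bfgsUpdate, bfgsUpdate, hdot, hquad, houter, houter]
  simp only [mul_add, add_mul, mul_sub, sub_mul, Matrix.mul_smul, Matrix.smul_mul, mul_assoc]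

/-- For `y = s` the decrease of the squared distance to the identity is a sum of two squares:
`Bs - θ s` is the part of `Bs` that is `B`-orthogonal to `s`. -/
theorem sq_frobNorm_bfgsUpdate_self_sub_one {B : Mat p} (hB : B.IsSymm) {s : Vec p} (hs : s ≠ 0)
    (hb : ⟪s, applyM B s⟫ ≠ 0) {θ : ℝ} (hθ : ‖applyM B s‖ ^ 2 = θ * ⟪s, applyM B s⟫) :
    frobNorm (bfgsUpdate B s s - 1) ^ 2 = frobNorm (B - 1) ^ 2 - (θ - 1) ^ 2 -
      2 * ⟪applyM B s - θ • s, applyM B (applyM B s - θ • s)⟫ / ⟪s, applyM B s⟫ := by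
  set w := applyM B s with hw
  have : ‖s‖ ^ 2 ≠ 0 := pow_ne_zero 2 (norm_ne_zero_iff.2 hs)
  have hupdate : bfgsUpdate B s s - 1 =
      (B - 1) + (‖s‖ ^ 2)⁻¹ • outer s s - ⟪s, w⟫⁻¹ • outer w w := by
    rw [bfgsUpdate_eq hB, real_inner_self_eq_norm_sq]
    abel
  have hdefect : ∀ x : Vec p, ⟪x, applyM (B - 1) x⟫ = ⟪x, applyM B x⟫ - ‖x‖ ^ 2 := fun x => by
    rw [applyM_sub_left, applyM_one, inner_sub_right, real_inner_self_eq_norm_sq]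
  have hquad : ⟪w - θ • s, applyM B (w - θ • s)⟫ = ⟪w, applyM B w⟫ - θ ^ 2 * ⟪s, w⟫ := by
    rw [applyM_sub, applyM_smul, ← hw]
    simp only [inner_sub_left, inner_sub_right, real_inner_smul_left, real_inner_smul_right]
    rw [← inner_applyM_left hB s w, ← hw, real_inner_self_eq_norm_sq, hθ]
    ring
  rw [hquad, frobNorm_eq_norm, frobNorm_eq_norm, hupdate, map_sub, map_add, map_smul, map_smul,
    ← real_inner_self_eq_norm_sq]
  simp only [inner_sub_left, inner_sub_right, inner_add_left, inner_add_right,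
    real_inner_smul_left, real_inner_smul_right, inner_frobVec_outer_outer]
  rw [real_inner_comm (frobVec (B - 1)) (frobVec (outer s s)),
    real_inner_comm (frobVec (B - 1)) (frobVec (outer w w)), inner_frobVec_outer,
    inner_frobVec_outer, hdefect, hdefect, real_inner_comm s w, ← hw]
  simp only [real_inner_self_eq_norm_sq, hθ]
  field_simp
  ring

theorem sq_frobNorm_bfgsUpdate_self_sub_one_le {B : Mat p} (hB : B.IsSymm)
    (hB1 : frobNorm (B - 1) ≤ 1 / 2) {s : Vec p} (hs : s ≠ 0) :
    frobNorm (bfgsUpdate B s s - 1) ^ 2 ≤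
      frobNorm (B - 1) ^ 2 - (‖applyM (B - 1) s‖ / ‖s‖) ^ 2 / 4 := by
  have hk : 0 < ‖s‖ ^ 2 := pow_pos (norm_pos_iff.2 hs) 2
  set b := ⟪s, applyM B s⟫
  obtain ⟨hb_lower, hb_upper⟩ := abs_le.1 (abs_inner_applyM_sub_sq_le hB1 s)
  have hb_pos : 0 < b := by linarith
  set θ := ‖applyM B s‖ ^ 2 / b
  set v := applyM B s - θ • s with hv
  have hv_quad : ‖v‖ ^ 2 / 2 ≤ ⟪v, applyM B v⟫ := by
    linarith [(abs_le.1 (abs_inner_applyM_sub_sq_le hB1 v)).1]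
  have hdecomp : ‖applyM (B - 1) s‖ ^ 2 ≤ 2 * (‖v‖ ^ 2 + (θ - 1) ^ 2 * ‖s‖ ^ 2) :=
    calc ‖applyM (B - 1) s‖ ^ 2 = ‖v + (θ - 1) • s‖ ^ 2 := by
          rw [applyM_sub_left, applyM_one, hv, sub_smul, one_smul]
          congr 2
          abel
      _ ≤ (‖v‖ + ‖(θ - 1) • s‖) ^ 2 := by gcongr; exact norm_add_le _ _
      _ ≤ 2 * (‖v‖ ^ 2 + ‖(θ - 1) • s‖ ^ 2) := add_sq_le
      _ = 2 * (‖v‖ ^ 2 + (θ - 1) ^ 2 * ‖s‖ ^ 2) := by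
          rw [norm_smul, mul_pow, Real.norm_eq_abs, sq_abs]
  have hquot : (‖applyM (B - 1) s‖ / ‖s‖) ^ 2 ≤ 2 * (‖v‖ ^ 2 / ‖s‖ ^ 2 + (θ - 1) ^ 2) := by
    rw [div_pow, div_le_iff₀ hk]
    refine hdecomp.trans_eq ?_
    field_simp
  have hv_div : ‖v‖ ^ 2 / ‖s‖ ^ 2 / 2 ≤ 2 * ⟪v, applyM B v⟫ / b :=
    calc ‖v‖ ^ 2 / ‖s‖ ^ 2 / 2 = ‖v‖ ^ 2 / (2 * ‖s‖ ^ 2) := by rw [div_div, mul_comm]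
      _ ≤ ‖v‖ ^ 2 / b := by gcongr; linarith
      _ ≤ 2 * ⟪v, applyM B v⟫ / b := by gcongr; linarith
  rw [sq_frobNorm_bfgsUpdate_self_sub_one hB hs hb_pos.ne' (div_mul_cancel₀ _ hb_pos.ne').symm]
  linarith [sq_nonneg (θ - 1)]

theorem inv_smul_outer_self_sub {s r : Vec p} (hs : s ≠ 0) (hsr : ⟪s + r, s⟫ ≠ 0) :
    ⟪s + r, s⟫⁻¹ • outer (s + r) (s + r) - ⟪s, s⟫⁻¹ • outer s s = ⟪s + r, s⟫⁻¹ •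
      (outer s r + outer r s + outer r r - (⟪r, s⟫ / ‖s‖ ^ 2) • outer s s) := by
  have hcoef : ⟪s + r, s⟫⁻¹ - ⟪s, s⟫⁻¹ = -(⟪s + r, s⟫⁻¹ * (⟪r, s⟫ / ‖s‖ ^ 2)) := by
    have hs0 : ‖s‖ ≠ 0 := norm_ne_zero_iff.2 hs
    rw [inner_add_left, real_inner_self_eq_norm_sq] at hsr ⊢
    field_simp
    ring
  have hself : ⟪s + r, s⟫⁻¹ • outer s s - ⟪s, s⟫⁻¹ • outer s s =
      -(⟪s + r, s⟫⁻¹ • (⟪r, s⟫ / ‖s‖ ^ 2) • outer s s) := by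
    rw [← sub_smul, hcoef, neg_smul, mul_smul]
  rw [outer_add_self, smul_add, smul_sub,
    sub_eq_add_neg _ (⟪s + r, s⟫⁻¹ • (⟪r, s⟫ / ‖s‖ ^ 2) • outer s s), ← hself]
  abel

theorem frobNorm_outer_self_sub_le {s r : Vec p} (hs : s ≠ 0) {η : ℝ} (hr : ‖r‖ ≤ η * ‖s‖)
    (hη : η ≤ 1 / 2) :
    frobNorm (⟪s + r, s⟫⁻¹ • outer (s + r) (s + r) - ⟪s, s⟫⁻¹ • outer s s) ≤ 7 * η := by
  have hs_pos : 0 < ‖s‖ := norm_pos_iff.2 hs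
  have hη0 : 0 ≤ η := nonneg_of_mul_nonneg_left ((norm_nonneg r).trans hr) hs_pos
  set k := ‖s‖ ^ 2 with hk
  have hk_pos : 0 < k := pow_pos hs_pos 2
  have hrs : |⟪r, s⟫| ≤ η * k :=
    calc |⟪r, s⟫| ≤ ‖r‖ * ‖s‖ := abs_real_inner_le_norm r s
      _ ≤ η * ‖s‖ * ‖s‖ := by gcongr
      _ = η * k := by rw [hk]; ring
  have hinner : ⟪s + r, s⟫ = k + ⟪r, s⟫ := by rw [inner_add_left, real_inner_self_eq_norm_sq]
  have hhalf : k / 2 ≤ ⟪s + r, s⟫ := by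
    nlinarith [(abs_le.1 hrs).1, mul_le_mul_of_nonneg_right hη hk_pos.le]
  have hpos : 0 < ⟪s + r, s⟫ := by linarith
  have hcorr : ‖frobVec (outer s r + outer r s + outer r r - (⟪r, s⟫ / k) • outer s s)‖ ≤
      7 * η * (k / 2) := by
    simp only [map_sub, map_add, map_smul]
    refine (norm_sub_le _ _).trans ((add_le_add_left norm_add₃_le _).trans ?_)
    rw [norm_smul, norm_frobVec_outer, norm_frobVec_outer, norm_frobVec_outer, norm_frobVec_outer,
      norm_div, Real.norm_of_nonneg hk_pos.le, ← sq ‖s‖, ← hk, div_mul_cancel₀ _ hk_pos.ne',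
      Real.norm_eq_abs]
    have hsr : ‖s‖ * ‖r‖ ≤ η * k := by rw [hk]; nlinarith
    have hrr : ‖r‖ * ‖r‖ ≤ η * k / 2 :=
      calc ‖r‖ * ‖r‖ ≤ η * ‖s‖ * (η * ‖s‖) := by gcongr
        _ = η * (η * k) := by rw [hk]; ring
        _ ≤ 1 / 2 * (η * k) := by gcongr
        _ = η * k / 2 := by ring
    linarith
  rw [inv_smul_outer_self_sub hs hpos.ne', ← hk, frobNorm_eq_norm, map_smul, norm_smul, norm_inv,
    Real.norm_of_nonneg hpos.le, inv_mul_le_iff₀ hpos, mul_comm]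
  exact hcorr.trans (by gcongr)

theorem sq_frobNorm_bfgsUpdate_sub_one_le {B : Mat p} (hB : B.IsSymm)
    (hB1 : frobNorm (B - 1) ≤ 1 / 2) {s y : Vec p} (hs : s ≠ 0) {η : ℝ}
    (hy : ‖y - s‖ ≤ η * ‖s‖) (hη : η ≤ 1 / 2) :
    frobNorm (bfgsUpdate B s y - 1) ^ 2 ≤
      frobNorm (B - 1) ^ 2 - (‖applyM (B - 1) s‖ / ‖s‖) ^ 2 / 4 + 32 * η := by
  have hself := sq_frobNorm_bfgsUpdate_self_sub_one_le hB hB1 hs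
  have hpert := frobNorm_outer_self_sub_le hs hy hη
  rw [add_sub_cancel] at hpert
  set X := bfgsUpdate B s s - 1 with hX
  set D := ⟪y, s⟫⁻¹ • outer y y - ⟪s, s⟫⁻¹ • outer s s with hD
  have hsplit : bfgsUpdate B s y - 1 = X + D := by
    rw [hX, hD, bfgsUpdate_eq hB, bfgsUpdate_eq hB]
    abel
  have htri : frobNorm (X + D) ≤ frobNorm X + frobNorm D := by
    simp only [frobNorm_eq_norm, map_add, norm_add_le]
  have hX_half : frobNorm X ≤ 1 / 2 := by
    refine le_trans ?_ hB1
    refine (sq_le_sq₀ (frobNorm_nonneg _) (frobNorm_nonneg _)).1 (hself.trans ?_)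
    linarith [sq_nonneg (‖applyM (B - 1) s‖ / ‖s‖)]
  have hη0 : 0 ≤ η := by linarith [frobNorm_nonneg D]
  calc frobNorm (bfgsUpdate B s y - 1) ^ 2 ≤ (frobNorm X + 7 * η) ^ 2 := by
        rw [hsplit]
        exact pow_le_pow_left₀ (frobNorm_nonneg _) (htri.trans (by gcongr)) 2
    _ = frobNorm X ^ 2 + (14 * frobNorm X + 49 * η) * η := by ring
    _ ≤ frobNorm X ^ 2 + 32 * η := by gcongr; linarith
    _ ≤ _ := by linarith

end BFGS


namespace IQNProblem

variable {p n : ℕ} (P : IQNProblem p n)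

theorem norm_gradient_sub_sub_le (i : Fin n) {a b : Vec p} {R : ℝ}
    (ha : ‖a - P.xstar‖ ≤ R) (hb : ‖b - P.xstar‖ ≤ R) :
    ‖gradient (P.f i) a - gradient (P.f i) b - applyM (P.Hess i P.xstar) (a - b)‖ ≤
      P.Ltil * R * ‖a - b‖ := by
  refine (convex_closedBall P.xstar R).norm_image_sub_le_of_norm_hasFDerivWithin_le'
    (f' := fun x => toEuclideanCLM (𝕜 := ℝ) (P.Hess i x))
    (φ := toEuclideanCLM (𝕜 := ℝ) (P.Hess i P.xstar))
    (fun x _ => (P.hHess i x).hasFDerivWithinAt) (fun x hx => ?_)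
    (mem_closedBall_iff_norm.2 hb) (mem_closedBall_iff_norm.2 ha)
  rw [← map_sub]
  exact (P.hLip i x P.xstar).trans
    (mul_le_mul_of_nonneg_left (mem_closedBall_iff_norm.1 hx) P.hLtil.le)

theorem sum_gradient_xstar : ∑ i, gradient (P.f i) P.xstar = 0 := by
  have hn : (n : ℝ)⁻¹ ≠ 0 := inv_ne_zero (Nat.cast_ne_zero.2 (Nat.one_le_iff_ne_zero.1 P.hn))
  have hderiv : HasFDerivAt (fun x => (n : ℝ)⁻¹ * ∑ i, P.f i x)
      ((n : ℝ)⁻¹ • ∑ i, fderiv ℝ (P.f i) P.xstar) P.xstar :=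
    (HasFDerivAt.fun_sum fun i _ =>
      ((P.hC2 i).differentiable two_ne_zero P.xstar).hasFDerivAt).const_mul _
  have hopt := P.hopt
  rw [gradient, hderiv.fderiv, map_smulₛₗ, map_sum] at hopt
  exact (smul_eq_zero.1 hopt).resolve_left hn

end IQNProblem

section Scaling

variable {p : ℕ}

/-- `M` is a symmetric inverse square root of `H`, and `κ` bounds the operator norms of `M` and
`M⁻¹`. It transports estimates near the identity to estimates near `H`. -/
structure IsInvSqrt (κ : ℝ) (M H : Mat p) : Prop where
  isSymm : M.IsSymm
  mul_mul : M * H * M = 1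
  opNorm_le : opNorm M ≤ κ
  opNorm_inv_le : opNorm M⁻¹ ≤ κ

/-- The Dennis–Moré quotient `‖X u‖ / ‖u‖` of `B` along the step `s`, where `X = M (B - H) M` and
`u = M⁻¹ s` are the error and the step in scaled variables; it is `0` for `s = 0`. -/
def dmQuotient (M H B : Mat p) (s : Vec p) : ℝ :=
  ‖applyM (M * (B - H) * M) (applyM M⁻¹ s)‖ / ‖applyM M⁻¹ s‖

theorem dmQuotient_nonneg (M H B : Mat p) (s : Vec p) : 0 ≤ dmQuotient M H B s :=
  div_nonneg (norm_nonneg _) (norm_nonneg _)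

theorem exists_isInvSqrt {ι : Type*} [Finite ι] {M H : ι → Mat p} (hM : ∀ i, (M i).IsSymm)
    (hMHM : ∀ i, M i * H i * M i = 1) : ∃ κ, ∀ i, IsInvSqrt κ (M i) (H i) := by
  obtain ⟨κ, hκ⟩ := (Set.finite_range fun i => max (opNorm (M i)) (opNorm (M i)⁻¹)).bddAbove
  exact ⟨κ, fun i => ⟨hM i, hMHM i, (le_max_left _ _).trans (hκ ⟨i, rfl⟩),
    (le_max_right _ _).trans (hκ ⟨i, rfl⟩)⟩⟩

namespace IsInvSqrt

variable {κ : ℝ} {M H : Mat p}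

theorem nonneg (hI : IsInvSqrt κ M H) : 0 ≤ κ :=
  (norm_nonneg _).trans hI.opNorm_le

theorem mul_eq_inv (hI : IsInvSqrt κ M H) : M * H = M⁻¹ :=
  (inv_eq_left_inv hI.mul_mul).symm

theorem mul_inv (hI : IsInvSqrt κ M H) : M * M⁻¹ = 1 := by
  rw [inv_eq_right_inv (by rw [← mul_assoc, hI.mul_mul] : M * (H * M) = 1), ← mul_assoc,
    hI.mul_mul]

theorem inv_mul (hI : IsInvSqrt κ M H) : M⁻¹ * M = 1 := by
  rw [← hI.mul_eq_inv, hI.mul_mul]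

theorem mul_sub_mul (hI : IsInvSqrt κ M H) (B : Mat p) : M * (B - H) * M = M * B * M - 1 := by
  rw [mul_sub, sub_mul, hI.mul_mul]

theorem applyM_applyM_inv (hI : IsInvSqrt κ M H) (v : Vec p) : applyM M (applyM M⁻¹ v) = v := by
  rw [← applyM_mul, hI.mul_inv, applyM_one]

theorem norm_applyM_le (hI : IsInvSqrt κ M H) (v : Vec p) : ‖applyM M v‖ ≤ κ * ‖v‖ :=
  (norm_applyM_le_opNorm M v).trans (mul_le_mul_of_nonneg_right hI.opNorm_le (norm_nonneg v))

theorem norm_applyM_inv_le (hI : IsInvSqrt κ M H) (v : Vec p) : ‖applyM M⁻¹ v‖ ≤ κ * ‖v‖ :=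
  (norm_applyM_le_opNorm _ v).trans (mul_le_mul_of_nonneg_right hI.opNorm_inv_le (norm_nonneg v))

theorem norm_le_norm_applyM_inv (hI : IsInvSqrt κ M H) (v : Vec p) : ‖v‖ ≤ κ * ‖applyM M⁻¹ v‖ := by
  simpa only [hI.applyM_applyM_inv] using hI.norm_applyM_le (applyM M⁻¹ v)

theorem norm_le_norm_applyM (hI : IsInvSqrt κ M H) (v : Vec p) : ‖v‖ ≤ κ * ‖applyM M v‖ := by
  simpa only [← applyM_mul, hI.inv_mul, applyM_one] using hI.norm_applyM_inv_le (applyM M v)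

theorem norm_applyM_le_norm_conj (hI : IsInvSqrt κ M H) (E : Mat p) (v : Vec p) :
    ‖applyM E v‖ ≤ κ * ‖applyM (M * E * M) (applyM M⁻¹ v)‖ := by
  rw [applyM_mul, hI.applyM_applyM_inv, applyM_mul]
  exact hI.norm_le_norm_applyM (applyM E v)

theorem norm_applyM_le_wNorm (hI : IsInvSqrt κ M H) (E : Mat p) (v : Vec p) :
    ‖applyM E v‖ ≤ κ ^ 2 * wNorm M E * ‖v‖ := by
  have hκ := hI.nonneg
  have hE : 0 ≤ wNorm M E := frobNorm_nonneg _
  calc ‖applyM E v‖ ≤ κ * ‖applyM (M * E * M) (applyM M⁻¹ v)‖ := hI.norm_applyM_le_norm_conj E v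
    _ ≤ κ * (wNorm M E * (κ * ‖v‖)) := by
        gcongr
        exact (norm_applyM_le_frobNorm _ _).trans
          (mul_le_mul_of_nonneg_left (hI.norm_applyM_inv_le v) hE)
    _ = κ ^ 2 * wNorm M E * ‖v‖ := by ring

theorem norm_applyM_sub_le_dmQuotient (hI : IsInvSqrt κ M H) (B : Mat p) (s : Vec p) :
    ‖applyM (B - H) s‖ ≤ κ ^ 2 * dmQuotient M H B s * ‖s‖ := by
  have hκ := hI.nonneg
  rcases eq_or_ne s 0 with rfl | hs
  · simp [applyM]
  have hu : ‖applyM M⁻¹ s‖ ≠ 0 := fun h => hs (norm_le_zero_iff.1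
    ((hI.norm_le_norm_applyM_inv s).trans_eq (by rw [h, mul_zero])))
  calc ‖applyM (B - H) s‖ ≤ κ * ‖applyM (M * (B - H) * M) (applyM M⁻¹ s)‖ :=
        hI.norm_applyM_le_norm_conj _ s
    _ = κ * (dmQuotient M H B s * ‖applyM M⁻¹ s‖) := by rw [dmQuotient, div_mul_cancel₀ _ hu]
    _ ≤ κ * (dmQuotient M H B s * (κ * ‖s‖)) := by
        gcongr
        · exact dmQuotient_nonneg M H B s
        · exact hI.norm_applyM_inv_le s
    _ = κ ^ 2 * dmQuotient M H B s * ‖s‖ := by ring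

theorem sq_norm_le_inner (hI : IsInvSqrt κ M H) {B : Mat p} (hB : wNorm M (B - H) ≤ 1 / 2)
    (v : Vec p) : ‖v‖ ^ 2 ≤ 2 * κ ^ 2 * ⟪v, applyM B v⟫ := by
  set u := applyM M⁻¹ v
  have hv : applyM M u = v := hI.applyM_applyM_inv v
  have hquad : ⟪u, applyM (M * B * M) u⟫ = ⟪v, applyM B v⟫ := by
    rw [applyM_mul, applyM_mul, ← inner_applyM_left hI.isSymm, hv]
  have hu : ‖u‖ ^ 2 ≤ 2 * ⟪v, applyM B v⟫ := by
    rw [wNorm, hI.mul_sub_mul] at hB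
    have hlower := (abs_le.1 (abs_inner_applyM_sub_sq_le hB u)).1
    linarith
  calc ‖v‖ ^ 2 ≤ (κ * ‖u‖) ^ 2 := by gcongr; exact hI.norm_le_norm_applyM_inv v
    _ = κ ^ 2 * ‖u‖ ^ 2 := mul_pow _ _ _
    _ ≤ κ ^ 2 * (2 * ⟪v, applyM B v⟫) := by gcongr
    _ = 2 * κ ^ 2 * ⟪v, applyM B v⟫ := by ring

theorem sq_wNorm_bfgsUpdate_sub_le (hI : IsInvSqrt κ M H) {B : Mat p} (hB : B.IsSymm)
    (hBH : wNorm M (B - H) ≤ 1 / 2) {s y : Vec p} (hs : s ≠ 0) {η : ℝ}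
    (hy : ‖y - applyM H s‖ ≤ η * ‖s‖) (hη : κ ^ 2 * η ≤ 1 / 2) :
    wNorm M (bfgsUpdate B s y - H) ^ 2 ≤
      wNorm M (B - H) ^ 2 - dmQuotient M H B s ^ 2 / 4 + 32 * (κ ^ 2 * η) := by
  have hκ := hI.nonneg
  set u := applyM M⁻¹ s
  have hMu : applyM M u = s := hI.applyM_applyM_inv s
  have hu0 : u ≠ 0 := fun h => hs (by rw [← hMu, h, applyM, map_zero])
  have hη0 : 0 ≤ η := nonneg_of_mul_nonneg_left ((norm_nonneg _).trans hy) (norm_pos_iff.2 hs)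
  have hsymm : (M * B * M).IsSymm := by
    rw [IsSymm, transpose_mul, transpose_mul, hI.isSymm.eq, hB.eq, mul_assoc]
  have hyu : ‖applyM M y - u‖ ≤ κ ^ 2 * η * ‖u‖ :=
    calc ‖applyM M y - u‖ = ‖applyM M (y - applyM H s)‖ := by
          rw [applyM_sub, ← applyM_mul, hI.mul_eq_inv]
      _ ≤ κ * ‖y - applyM H s‖ := hI.norm_applyM_le _
      _ ≤ κ * (η * (κ * ‖u‖)) := by
          gcongr
          exact hy.trans (mul_le_mul_of_nonneg_left (hI.norm_le_norm_applyM_inv s) hη0)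
      _ = κ ^ 2 * η * ‖u‖ := by ring
  rw [wNorm, hI.mul_sub_mul] at hBH
  have hstep := sq_frobNorm_bfgsUpdate_sub_one_le hsymm hBH hu0 hyu hη
  rwa [← mul_bfgsUpdate_mul hI.isSymm, hMu, ← hI.mul_sub_mul, ← hI.mul_sub_mul] at hstep

end IsInvSqrt

end Scaling

section Radii

/-- Radii `ε` for the iterates and `δ` for the weighted Hessian approximations that guarantee
linear convergence with rate `ρ`: `drift` makes the total growth of the squared Hessian errors
along a run at most `δ ^ 2 / 2`. -/
structure AdmissibleRadii (n : ℕ) (κ Lt ρ ε δ : ℝ) : Prop where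
  eps_pos : 0 < ε
  delta_pos : 0 < δ
  rho_pos : 0 < ρ
  rho_lt_one : ρ < 1
  half_le_pow : 1 / 2 ≤ ρ ^ n
  delta_le_half : δ ≤ 1 / 2
  hessian : 8 * κ ^ 4 * δ ≤ 1
  drift : 128 * κ ^ 2 * Lt * ε ≤ δ ^ 2 * (1 - ρ)

theorem exists_rate_half_le_pow (n : ℕ) : ∃ ρ : ℝ, 0 < ρ ∧ ρ < 1 ∧ 1 / 2 ≤ ρ ^ n := by
  have hlim : Tendsto (fun ρ : ℝ => ρ ^ n) (nhdsWithin 1 (Set.Iio 1)) (nhds 1) := by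
    simpa only [one_pow] using ((continuous_pow n).tendsto (1 : ℝ)).mono_left nhdsWithin_le_nhds
  have hhalf := hlim.eventually (eventually_ge_nhds (by norm_num : (1 / 2 : ℝ) < 1))
  obtain ⟨ρ, hρ, hρ0, hρ1⟩ :=
    (hhalf.and (Ioo_mem_nhdsLT (zero_lt_one : (0 : ℝ) < 1))).exists
  exact ⟨ρ, hρ0, hρ1, hρ⟩

theorem exists_admissibleRadii (n : ℕ) (κ : ℝ) {Lt : ℝ} (hLt : 0 ≤ Lt) :
    ∃ ρ ε δ : ℝ, AdmissibleRadii n κ Lt ρ ε δ := by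
  obtain ⟨ρ, hρ0, hρ1, hρ⟩ := exists_rate_half_le_pow n
  have hκ4 : 0 ≤ κ ^ 4 := by positivity
  have hδ : 0 < 1 / (8 * κ ^ 4 + 2) := by positivity
  refine ⟨ρ, (1 / (8 * κ ^ 4 + 2)) ^ 2 * (1 - ρ) / (128 * κ ^ 2 * Lt + 1), 1 / (8 * κ ^ 4 + 2),
    ⟨?_, hδ, hρ0, hρ1, hρ, ?_, ?_, ?_⟩⟩
  · have : 0 < 1 - ρ := sub_pos.2 hρ1
    positivity
  · rw [div_le_div_iff₀ (by positivity) two_pos]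
    linarith
  · rw [mul_one_div, div_le_one (by positivity)]
    linarith
  · rw [mul_div_assoc', div_le_iff₀ (by positivity), mul_comm]
    have : 0 ≤ 1 - ρ := sub_nonneg.2 hρ1.le
    gcongr
    linarith

namespace AdmissibleRadii

variable {n : ℕ} {κ Lt ρ ε δ : ℝ}

theorem mul_eps_le (hR : AdmissibleRadii n κ Lt ρ ε δ) : 128 * (κ ^ 2 * (Lt * ε)) ≤ 1 / 4 := by
  have hδ := hR.delta_pos
  calc 128 * (κ ^ 2 * (Lt * ε)) = 128 * κ ^ 2 * Lt * ε := by ring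
    _ ≤ δ ^ 2 * (1 - ρ) := hR.drift
    _ ≤ (1 / 2) ^ 2 * 1 := by
        gcongr
        · exact sub_nonneg.2 hR.rho_lt_one.le
        · exact hR.delta_le_half
        · exact sub_le_self _ hR.rho_pos.le
    _ = 1 / 4 := by norm_num

theorem contraction (hR : AdmissibleRadii n κ Lt ρ ε δ) :
    4 * κ ^ 2 * (κ ^ 2 * δ + Lt * ε) ≤ 1 := by
  linarith [hR.hessian, hR.mul_eps_le]

end AdmissibleRadii

end Radii

namespace IQNState

variable {p n : ℕ} {P : IQNProblem p n} (S : IQNState P)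

/-- The distance `‖x^t - x*‖` to the minimizer. -/
def residual (t : ℕ) : ℝ := ‖S.x t - P.xstar‖

/-- The weighted error of `B_i^t` as an approximation of the Hessian of `f_i` at `x*`. -/
def hessErr (M : Fin n → Mat p) (i : Fin n) (t : ℕ) : ℝ :=
  wNorm (M i) (S.B i t - P.Hess i P.xstar)

/-- The step `s^t = z_{i_t}^{t+1} - z_{i_t}^t`. -/
def step (t : ℕ) : Vec p := S.z (cyc P.hn t) (t + 1) - S.z (cyc P.hn t) t

/-- The Dennis–Moré quotient of the matrix `B_{i_t}^t` being updated along the step `s^t`. -/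
def dmQuot (M : Fin n → Mat p) (t : ℕ) : ℝ :=
  dmQuotient (M (cyc P.hn t)) (P.Hess (cyc P.hn t) P.xstar) (S.B (cyc P.hn t) t) (S.step t)

theorem residual_nonneg (t : ℕ) : 0 ≤ S.residual t :=
  norm_nonneg _

theorem dmQuot_nonneg (M : Fin n → Mat p) (t : ℕ) : 0 ≤ S.dmQuot M t :=
  dmQuotient_nonneg _ _ _ _

theorem hessErr_nonneg (M : Fin n → Mat p) (i : Fin n) (t : ℕ) : 0 ≤ S.hessErr M i t :=
  frobNorm_nonneg _

theorem exists_norm_z_sub_eq_residual (i : Fin n) (t : ℕ) :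
    ∃ τ, τ ≤ t ∧ t < τ + n ∧ ‖S.z i t - P.xstar‖ = S.residual τ := by
  obtain ⟨τ, hτt, htτ, hz⟩ := exists_eq_of_cyc_update P.hn S.hz0 S.hzupd S.hzfix i t
  exact ⟨τ, hτt, htτ, by rw [hz, residual]⟩

theorem exists_next_update (i : Fin n) (t : ℕ) :
    ∃ s, t ≤ s ∧ cyc P.hn s = i ∧ S.z i s = S.z i t ∧ S.B i s = S.B i t := by
  obtain ⟨s, hts, hs, hne⟩ := exists_first_cyc_eq P.hn i t
  exact ⟨s, hts, hs, eq_of_forall_ne_cyc P.hn S.hzfix hts hne,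
    eq_of_forall_ne_cyc P.hn S.hBfix hts hne⟩

theorem step_eq (t : ℕ) :
    S.step t = (S.x (t + 1) - P.xstar) - (S.z (cyc P.hn t) t - P.xstar) := by
  rw [step, S.hzupd, sub_sub_sub_cancel_right]

theorem sum_applyM_sub_xstar (t : ℕ) :
    ∑ i, applyM (S.B i t) (S.x (t + 1) - P.xstar) =
      ∑ i, (applyM (S.B i t - P.Hess i P.xstar) (S.z i t - P.xstar) -
        (gradient (P.f i) (S.z i t) - gradient (P.f i) P.xstar -
          applyM (P.Hess i P.xstar) (S.z i t - P.xstar))) := by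
  have hn : (n : ℝ)⁻¹ ≠ 0 := inv_ne_zero (Nat.cast_ne_zero.2 (Nat.one_le_iff_ne_zero.1 P.hn))
  have hmean : applyM ((n : ℝ)⁻¹ • ∑ i, S.B i t) (S.x (t + 1)) =
      (n : ℝ)⁻¹ • ∑ i, applyM (S.B i t) (S.x (t + 1)) := by
    simp [applyM, map_smul, map_sum]
  have hsolve : ∑ i, applyM (S.B i t) (S.x (t + 1)) =
      ∑ i, applyM (S.B i t) (S.z i t) - ∑ i, gradient (P.f i) (S.z i t) := by
    refine smul_right_injective _ hn ?_
    simp only [smul_sub]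
    rw [← hmean, S.hx t, ← applyM_mul,
      mul_nonsing_inv _ ((isUnit_iff_isUnit_det _).1 (S.hinv t)), applyM_one]
  simp only [applyM_sub, applyM_sub_left, Finset.sum_sub_distrib, hsolve, P.sum_gradient_xstar]
  abel

section Weighted

variable {κ : ℝ} {M : Fin n → Mat p} (hI : ∀ i, IsInvSqrt κ (M i) (P.Hess i P.xstar))
include hI

theorem residual_succ_le {t : ℕ} {c : ℝ} (hB : ∀ i, S.hessErr M i t ≤ 1 / 2)
    (hc : ∀ i, ‖applyM (S.B i t - P.Hess i P.xstar) (S.z i t - P.xstar)‖ +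
      P.Ltil * ‖S.z i t - P.xstar‖ ^ 2 ≤ c) :
    S.residual (t + 1) ≤ 2 * κ ^ 2 * c := by
  set d := S.x (t + 1) - P.xstar with hd
  set g : Fin n → Vec p := fun i =>
    applyM (S.B i t - P.Hess i P.xstar) (S.z i t - P.xstar) -
      (gradient (P.f i) (S.z i t) - gradient (P.f i) P.xstar -
        applyM (P.Hess i P.xstar) (S.z i t - P.xstar))
  have hgc : ∀ i, ‖g i‖ ≤ c := fun i => by
    have htaylor := P.norm_gradient_sub_sub_le i (a := S.z i t) (b := P.xstar) le_rfl (by simp)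
    rw [mul_assoc, ← sq] at htaylor
    exact (norm_sub_le _ _).trans ((add_le_add_right htaylor _).trans (hc i))
  have hn : (0 : ℝ) < n := Nat.cast_pos.2 P.hn
  rcases (norm_nonneg d).eq_or_lt with hd0 | hd0
  · have hc0 : 0 ≤ c := (norm_nonneg _).trans (hgc ⟨0, P.hn⟩)
    rw [residual, ← hd, ← hd0]
    positivity
  refine le_of_mul_le_mul_left ?_ (mul_pos hn hd0)
  calc n * ‖d‖ * S.residual (t + 1) = ∑ _i : Fin n, ‖d‖ ^ 2 := by
        rw [Finset.sum_const, Finset.card_univ, Fintype.card_fin, nsmul_eq_mul, residual]; ring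
    _ ≤ ∑ i, 2 * κ ^ 2 * ⟪d, applyM (S.B i t) d⟫ :=
        Finset.sum_le_sum fun i _ => (hI i).sq_norm_le_inner (hB i) d
    _ = 2 * κ ^ 2 * ∑ i, ⟪d, g i⟫ := by
        rw [← Finset.mul_sum, ← inner_sum, S.sum_applyM_sub_xstar t, inner_sum]
    _ ≤ 2 * κ ^ 2 * ∑ _i : Fin n, ‖d‖ * c := by
        gcongr with i
        exact (real_inner_le_norm _ _).trans (by gcongr; exact hgc i)
    _ = n * ‖d‖ * (2 * κ ^ 2 * c) := by
        rw [Finset.sum_const, Finset.card_univ, Fintype.card_fin, nsmul_eq_mul]; ring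

theorem sq_hessErr_succ_le {t : ℕ} {R : ℝ} (hB : S.hessErr M (cyc P.hn t) t ≤ 1 / 2)
    (hz : ‖S.z (cyc P.hn t) t - P.xstar‖ ≤ R) (hx : S.residual (t + 1) ≤ R)
    (hR : κ ^ 2 * (P.Ltil * R) ≤ 1 / 2) :
    S.hessErr M (cyc P.hn t) (t + 1) ^ 2 ≤ S.hessErr M (cyc P.hn t) t ^ 2 -
      S.dmQuot M t ^ 2 / 4 + 32 * (κ ^ 2 * (P.Ltil * R)) := by
  rw [hessErr, S.hBupd]
  refine (hI _).sq_wNorm_bfgsUpdate_sub_le (S.hsym _ _) hB (S.hs t) ?_ hR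
  exact P.norm_gradient_sub_sub_le _ (by rwa [S.hzupd]) hz

theorem norm_applyM_sub_le (t : ℕ) :
    ‖applyM (S.B (cyc P.hn t) t - P.Hess (cyc P.hn t) P.xstar)
        (S.z (cyc P.hn t) t - P.xstar)‖ ≤
      κ ^ 2 * S.dmQuot M t * (‖S.z (cyc P.hn t) t - P.xstar‖ + S.residual (t + 1)) +
        κ ^ 2 * S.hessErr M (cyc P.hn t) t * S.residual (t + 1) := by
  set i := cyc P.hn t
  set E := S.B i t - P.Hess i P.xstar
  have hz : S.z i t - P.xstar = (S.x (t + 1) - P.xstar) - S.step t := by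
    rw [step_eq, sub_sub_cancel]
  have hstep : ‖S.step t‖ ≤ ‖S.z i t - P.xstar‖ + S.residual (t + 1) := by
    rw [step_eq]
    exact (norm_sub_le _ _).trans_eq (add_comm _ _)
  have hq : 0 ≤ κ ^ 2 * S.dmQuot M t := mul_nonneg (sq_nonneg κ) (S.dmQuot_nonneg M t)
  calc ‖applyM E (S.z i t - P.xstar)‖
      ≤ ‖applyM E (S.step t)‖ + ‖applyM E (S.x (t + 1) - P.xstar)‖ := by
        rw [hz, applyM_sub]
        exact (norm_sub_le _ _).trans_eq (add_comm _ _)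
    _ ≤ _ := add_le_add
        (((hI i).norm_applyM_sub_le_dmQuotient _ _).trans (mul_le_mul_of_nonneg_left hstep hq))
        ((hI i).norm_applyM_le_wNorm E _)

theorem residual_le_tailSup {δ : ℝ} (hδ : δ ≤ 1 / 2) (herr : ∀ i t, S.hessErr M i t ≤ δ)
    (hr : BddAbove (Set.range S.residual)) (hq : BddAbove (Set.range (S.dmQuot M))) {m s : ℕ}
    (hms : m + n ≤ s) :
    S.residual s ≤
      2 * κ ^ 2 * (2 * κ ^ 2 * tailSup (S.dmQuot M) m + P.Ltil * tailSup S.residual m) *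
          tailSup S.residual m +
        2 * κ ^ 4 * δ * tailSup S.residual (m + n) := by
  have hn := P.hn
  obtain ⟨s, rfl⟩ : ∃ r, s = r + 1 := ⟨s - 1, by omega⟩
  set U := tailSup S.residual
  set Q := tailSup (S.dmQuot M)
  have : 0 ≤ U m := tailSup_nonneg S.residual_nonneg m
  have hQ : 0 ≤ Q m := tailSup_nonneg (S.dmQuot_nonneg M) m
  have hL := P.hLtil.le
  refine (S.residual_succ_le hI (c := κ ^ 2 * Q m * (U m + U m) + κ ^ 2 * δ * U (m + n) +
    P.Ltil * U m ^ 2) (fun i => (herr i s).trans hδ) fun i => ?_).trans_eq (by ring)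
  have hz : ‖S.z i s - P.xstar‖ ≤ U m := by
    obtain ⟨τ, -, hsτ, hτ⟩ := S.exists_norm_z_sub_eq_residual i s
    exact hτ ▸ le_tailSup hr (by omega)
  obtain ⟨r, hsr, rfl, hzr, hBr⟩ := S.exists_next_update i s
  have herror := S.norm_applyM_sub_le hI r
  rw [hzr, hBr] at herror
  have hqr : S.dmQuot M r ≤ Q m := le_tailSup hq (by omega)
  have hxr : S.residual (r + 1) ≤ U (m + n) := le_tailSup hr (by omega)
  have hxr' : S.residual (r + 1) ≤ U m := le_tailSup hr (by omega)
  have hr0 := S.residual_nonneg (r + 1)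
  have hδ0 : 0 ≤ δ := (S.hessErr_nonneg M (cyc P.hn r) r).trans (herr _ _)
  refine add_le_add (herror.trans (add_le_add ?_ ?_)) (by gcongr)
  · gcongr
  · gcongr
    exact herr _ _

theorem rSuperlinear_residual {δ : ℝ} (hδ : δ ≤ 1 / 2) (hκδ : 2 * κ ^ 4 * δ < 1)
    (herr : ∀ i t, S.hessErr M i t ≤ δ) (hr : Tendsto S.residual atTop (nhds 0))
    (hq : Tendsto (S.dmQuot M) atTop (nhds 0)) : RSuperlinear S.residual := by
  refine rSuperlinear_of_le_tailSup P.hn hκδ S.residual_nonneg hr.bddAbove_range ?_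
    fun m s hms => S.residual_le_tailSup hI hδ herr hr.bddAbove_range hq.bddAbove_range hms
  have hU := tendsto_tailSup S.residual_nonneg hr
  have hQ := tendsto_tailSup (S.dmQuot_nonneg M) hq
  simpa only [mul_zero, add_zero] using
    ((hQ.const_mul (2 * κ ^ 2)).add (hU.const_mul P.Ltil)).const_mul (2 * κ ^ 2)

end Weighted

section LinearPhase

/-- The squared weighted Hessian error plus what the drift can still add to it after time `t`. -/
def potential (M : Fin n → Mat p) (ρ δ : ℝ) (i : Fin n) (t : ℕ) : ℝ :=
  S.hessErr M i t ^ 2 + δ ^ 2 / 2 * ρ ^ t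

/-- The invariant of the linear phase: up to time `t` the residuals decay with rate `ρ`, and the
potentials are at most `δ ^ 2`. -/
structure InLinearPhase (M : Fin n → Mat p) (ρ ε δ : ℝ) (t : ℕ) : Prop where
  residual_le : ∀ τ ≤ t, S.residual τ ≤ ε * ρ ^ τ
  potential_le : ∀ i, S.potential M ρ δ i t ≤ δ ^ 2

variable {S} {κ ρ ε δ : ℝ} {M : Fin n → Mat p}
  (hI : ∀ i, IsInvSqrt κ (M i) (P.Hess i P.xstar))
  (hR : AdmissibleRadii n κ P.Ltil ρ ε δ)

namespace InLinearPhase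

variable {t : ℕ} (h : S.InLinearPhase M ρ ε δ t)

include hR h

theorem hessErr_le (i : Fin n) : S.hessErr M i t ≤ δ := by
  have hρ := hR.rho_pos
  refine (sq_le_sq₀ (S.hessErr_nonneg M i t) hR.delta_pos.le).1 (le_trans ?_ (h.potential_le i))
  exact le_add_of_nonneg_right (by positivity)

theorem norm_z_sub_le (i : Fin n) : ‖S.z i t - P.xstar‖ ≤ 2 * (ε * ρ ^ (t + 1)) := by
  obtain ⟨τ, hτt, htτ, hτ⟩ := S.exists_norm_z_sub_eq_residual i t
  have hε := hR.eps_pos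
  have hρ := hR.rho_pos
  have hpow : ρ ^ τ ≤ 2 * ρ ^ (t + 1) :=
    calc ρ ^ τ ≤ 2 * (ρ ^ τ * ρ ^ n) := by nlinarith [hR.half_le_pow, pow_pos hρ τ]
      _ = 2 * ρ ^ (τ + n) := by rw [pow_add]
      _ ≤ 2 * ρ ^ (t + 1) := mul_le_mul_of_nonneg_left
          (pow_le_pow_of_le_one hρ.le hR.rho_lt_one.le htτ) zero_le_two
  calc ‖S.z i t - P.xstar‖ ≤ ε * ρ ^ τ := hτ ▸ h.residual_le τ hτt
    _ ≤ ε * (2 * ρ ^ (t + 1)) := by gcongr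
    _ = 2 * (ε * ρ ^ (t + 1)) := by ring

theorem norm_z_sub_le_eps (i : Fin n) : ‖S.z i t - P.xstar‖ ≤ ε := by
  obtain ⟨τ, hτt, -, hτ⟩ := S.exists_norm_z_sub_eq_residual i t
  exact hτ ▸ (h.residual_le τ hτt).trans
    (mul_le_of_le_one_right hR.eps_pos.le (pow_le_one₀ hR.rho_pos.le hR.rho_lt_one.le))

include hI

theorem residual_succ_le : S.residual (t + 1) ≤ ε * ρ ^ (t + 1) := by
  have hL := P.hLtil.le
  have hε := hR.eps_pos
  have hρ := hR.rho_pos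
  have hδ := hR.delta_pos
  have hterm : ∀ i, ‖applyM (S.B i t - P.Hess i P.xstar) (S.z i t - P.xstar)‖ +
      P.Ltil * ‖S.z i t - P.xstar‖ ^ 2 ≤
        (κ ^ 2 * δ + P.Ltil * ε) * (2 * (ε * ρ ^ (t + 1))) := fun i => by
    calc _ ≤ κ ^ 2 * δ * ‖S.z i t - P.xstar‖ + P.Ltil * ε * ‖S.z i t - P.xstar‖ := by
          refine add_le_add (((hI i).norm_applyM_le_wNorm _ _).trans ?_) ?_
          · gcongr
            exact h.hessErr_le hR i
          · rw [sq, ← mul_assoc]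
            gcongr
            exact h.norm_z_sub_le_eps hR i
      _ = (κ ^ 2 * δ + P.Ltil * ε) * ‖S.z i t - P.xstar‖ := (add_mul _ _ _).symm
      _ ≤ _ := by gcongr; exact h.norm_z_sub_le hR i
  calc S.residual (t + 1)
      ≤ 2 * κ ^ 2 * ((κ ^ 2 * δ + P.Ltil * ε) * (2 * (ε * ρ ^ (t + 1)))) :=
        S.residual_succ_le hI (fun i => (h.hessErr_le hR i).trans hR.delta_le_half) hterm
    _ = 4 * κ ^ 2 * (κ ^ 2 * δ + P.Ltil * ε) * (ε * ρ ^ (t + 1)) := by ring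
    _ ≤ ε * ρ ^ (t + 1) := mul_le_of_le_one_left (by positivity) hR.contraction

theorem sq_dmQuot_div_four_le :
    S.dmQuot M t ^ 2 / 4 ≤ S.potential M ρ δ (cyc P.hn t) t -
      S.potential M ρ δ (cyc P.hn t) (t + 1) := by
  have hε := hR.eps_pos
  have hρ := hR.rho_pos
  have hpow : 0 < ρ ^ t := pow_pos hρ t
  have hpow_succ : ρ ^ (t + 1) ≤ ρ ^ t := pow_le_pow_of_le_one hρ.le hR.rho_lt_one.le t.le_succ
  have hz : ‖S.z (cyc P.hn t) t - P.xstar‖ ≤ 2 * (ε * ρ ^ t) :=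
    (h.norm_z_sub_le hR _).trans (by gcongr)
  have hx : S.residual (t + 1) ≤ 2 * (ε * ρ ^ t) := by
    refine (h.residual_succ_le hI hR).trans ?_
    nlinarith
  have hsmall : κ ^ 2 * (P.Ltil * (2 * (ε * ρ ^ t))) ≤ 1 / 2 := by
    have hone : ρ ^ t ≤ 1 := pow_le_one₀ hρ.le hR.rho_lt_one.le
    have hL := P.hLtil.le
    calc κ ^ 2 * (P.Ltil * (2 * (ε * ρ ^ t))) ≤ κ ^ 2 * (P.Ltil * (2 * (ε * 1))) := by gcongr
      _ ≤ 1 / 2 := by linarith [hR.mul_eps_le]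
  have hstep := S.sq_hessErr_succ_le hI ((h.hessErr_le hR _).trans hR.delta_le_half) hz hx hsmall
  have hdrift : 128 * κ ^ 2 * P.Ltil * ε * ρ ^ t ≤ δ ^ 2 * (1 - ρ) * ρ ^ t :=
    mul_le_mul_of_nonneg_right hR.drift hpow.le
  rw [potential, potential, pow_succ ρ]
  linarith

theorem potential_succ_le (i : Fin n) :
    S.potential M ρ δ i (t + 1) ≤ S.potential M ρ δ i t := by
  by_cases hi : i = cyc P.hn t
  · subst hi
    linarith [h.sq_dmQuot_div_four_le hI hR, sq_nonneg (S.dmQuot M t)]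
  · have hpow : ρ ^ (t + 1) ≤ ρ ^ t :=
      pow_le_pow_of_le_one hR.rho_pos.le hR.rho_lt_one.le t.le_succ
    rw [potential, potential, hessErr, hessErr, S.hBfix t i hi]
    gcongr

end InLinearPhase

include hI hR

theorem inLinearPhase (hx : S.residual 0 < ε) (hB : ∀ i, S.hessErr M i 0 < δ / 2) (t : ℕ) :
    S.InLinearPhase M ρ ε δ t := by
  induction t with
  | zero =>
    refine ⟨fun τ hτ => ?_, fun i => ?_⟩
    · rw [Nat.le_zero.1 hτ, pow_zero, mul_one]
      exact hx.le
    · have hsq : S.hessErr M i 0 ^ 2 ≤ (δ / 2) ^ 2 :=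
        pow_le_pow_left₀ (S.hessErr_nonneg M i 0) (hB i).le 2
      rw [potential, pow_zero]
      linarith [sq_nonneg δ]
  | succ t ih =>
    refine ⟨fun τ hτ => ?_, fun i => (ih.potential_succ_le hI hR i).trans (ih.potential_le i)⟩
    rcases Nat.le_succ_iff.1 hτ with hτ | rfl
    · exact ih.residual_le τ hτ
    · exact ih.residual_succ_le hI hR

theorem tendsto_dmQuot (h : ∀ t, S.InLinearPhase M ρ ε δ t) :
    Tendsto (S.dmQuot M) atTop (nhds 0) := by
  have hρ := hR.rho_pos
  have hpotential : ∀ t, 0 ≤ ∑ i, S.potential M ρ δ i t := fun t =>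
    Finset.sum_nonneg fun i _ => by rw [potential]; positivity
  have hdecrease : ∀ t, S.dmQuot M t ^ 2 / 4 ≤
      ∑ i, S.potential M ρ δ i t - ∑ i, S.potential M ρ δ i (t + 1) := fun t => by
    rw [← Finset.sum_sub_distrib]
    exact ((h t).sq_dmQuot_div_four_le hI hR).trans (Finset.single_le_sum
      (f := fun i => S.potential M ρ δ i t - S.potential M ρ δ i (t + 1))
      (fun i _ => sub_nonneg.2 ((h t).potential_succ_le hI hR i)) (Finset.mem_univ _))
  have hsq := tendsto_zero_of_le_sub_succ (fun t => by positivity) hpotential hdecrease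
  have hsqrt := (hsq.const_mul 4).sqrt
  simpa only [mul_div_cancel₀ _ (four_ne_zero' ℝ), mul_zero, Real.sqrt_zero,
    Real.sqrt_sq (S.dmQuot_nonneg M _)] using hsqrt

theorem rSuperlinear_residual_of_lt (hx : S.residual 0 < ε)
    (hB : ∀ i, S.hessErr M i 0 < δ / 2) : RSuperlinear S.residual := by
  have h := inLinearPhase hI hR hx hB
  have hlim : Tendsto (fun t => ε * ρ ^ t) atTop (nhds 0) := by
    simpa only [mul_zero] using
      (tendsto_pow_atTop_nhds_zero_of_lt_one hR.rho_pos.le hR.rho_lt_one).const_mul ε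
  refine S.rSuperlinear_residual hI hR.delta_le_half (by linarith [hR.hessian])
    (fun i t => (h t).hessErr_le hR i) ?_ (tendsto_dmQuot hI hR h)
  exact squeeze_zero S.residual_nonneg (fun t => (h t).residual_le t le_rfl) hlim

end LinearPhase

end IQNState

/-- second part of Theorem 2 of the paper: locally, the residual
sequence `‖x^t − x*‖` converges to zero R-superlinearly: it is dominated by a
positive sequence `ζ^t` with `ζ^{t+1}/ζ^t → 0`. -/
theorem stmt10 {p n : ℕ} (P : IQNProblem p n) (M : Fin n → Mat p)
    (hM : ∀ i, (M i).PosDef ∧ M i * P.Hess i P.xstar * M i = 1) :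
    ∃ ε > (0:ℝ), ∃ δ > (0:ℝ), ∀ S : IQNState P,
      (∀ t, S.x t ≠ P.xstar) →
      ‖S.x 0 - P.xstar‖ < ε →
      (∀ i, wNorm (M i) (S.B i 0 - P.Hess i P.xstar) < δ) →
      ∃ ζ : ℕ → ℝ, (∀ t, 0 < ζ t) ∧
        (∀ t, ‖S.x t - P.xstar‖ ≤ ζ t) ∧
        Tendsto (fun t : ℕ => ζ (t+1) / ζ t) atTop (nhds 0) := by
  obtain ⟨κ, hI⟩ := exists_isInvSqrt (fun i => isHermitian_iff_isSymm.1 (hM i).1.isHermitian)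
    fun i => (hM i).2
  obtain ⟨ρ, ε, δ, hR⟩ := exists_admissibleRadii n κ P.hLtil.le
  exact ⟨ε, hR.eps_pos, δ / 2, half_pos hR.delta_pos, fun S _ hx hB =>
    IQNState.rSuperlinear_residual_of_lt hI hR hx hB⟩

end
end

section
/- Let (a_t)_{t≥0}, (σ_t)_{t≥0}, and (θ_t)_{t≥0} be sequences of nonnegative real numbers and let α, α₃, α₄ be positive constants such that Σ_{t=0}^∞ σ_t < ∞ and, for all t, α θ_t² a_t ≤ a_t − a_{t+1} + σ_t(α₃ a_t + α₄). Then Σ_{t=0}^∞ θ_t² a_t < ∞. -/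
open Filter

/-!
This is the deterministic case of the Robbins–Siegmund argument. Suppose that
`u (n + 1) + d n ≤ (1 + c n) * u n + b n` with `u`, `d` nonnegative and `b`, `c` summable. A real
summable sequence is absolutely summable, so `c` and `b` may be replaced by `|c|` and `|b|`, and the
discrete Grönwall inequality then bounds `u` by some `M`. Hence `d n` is at most the telescoping
term `u n - u (n + 1)` plus the summable error `|c n| * M + b n`.
-/

section RobbinsSiegmund

variable {u b c d : ℕ → ℝ}

theorem bddAbove_range_of_le_one_add_mul_add (hu : ∀ n, 0 ≤ u n) (hc : Summable c)
    (hb : Summable b) (hrec : ∀ n, u (n + 1) ≤ (1 + c n) * u n + b n) :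
    BddAbove (Set.range u) := by
  have hrec_abs (n : ℕ) : u (n + 1) ≤ (1 + |c n|) * u n + |b n| :=
    calc u (n + 1) ≤ (1 + c n) * u n + b n := hrec n
      _ ≤ (1 + |c n|) * u n + |b n| := by
        gcongr
        exacts [hu n, le_abs_self _, le_abs_self _]
  have sum_le_tsum_abs {f : ℕ → ℝ} (hf : Summable f) (s : Finset ℕ) :
      ∑ k ∈ s, |f k| ≤ ∑' k, |f k| :=
    hf.abs.sum_le_tsum s fun k _ ↦ abs_nonneg (f k)
  refine ⟨(u 0 + ∑' k, |b k|) * Real.exp (∑' k, |c k|), Set.forall_mem_range.2 fun n ↦ ?_⟩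
  calc u n
    _ ≤ (u 0 + ∑ k ∈ Finset.Ico 0 n, |b k|) * Real.exp (∑ k ∈ Finset.Ico 0 n, |c k|) :=
      discrete_gronwall (hu 0) (fun k _ ↦ hrec_abs k) (fun k _ ↦ abs_nonneg (c k))
        (fun k _ ↦ abs_nonneg (b k)) n.zero_le
    _ ≤ (u 0 + ∑' k, |b k|) * Real.exp (∑' k, |c k|) := by
      gcongr
      exacts [add_nonneg (hu 0) (tsum_nonneg fun k ↦ abs_nonneg (b k)),
        sum_le_tsum_abs hb _, sum_le_tsum_abs hc _]

theorem summable_of_le_sub_succ_add (hd : ∀ n, 0 ≤ d n) (hu : BddBelow (Set.range u))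
    (hb : Summable b) (hle : ∀ n, d n ≤ u n - u (n + 1) + b n) : Summable d := by
  obtain ⟨m, hm⟩ := hu
  obtain ⟨B, hB⟩ := hb.hasSum.tendsto_sum_nat.bddAbove_range
  refine summable_of_sum_range_le (c := u 0 - m + B) hd fun n ↦ ?_
  calc ∑ k ∈ Finset.range n, d k
    _ ≤ ∑ k ∈ Finset.range n, (u k - u (k + 1) + b k) := Finset.sum_le_sum fun k _ ↦ hle k
    _ = u 0 - u n + ∑ k ∈ Finset.range n, b k := by
      rw [Finset.sum_add_distrib, Finset.sum_range_sub']
    _ ≤ u 0 - m + B := by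
      gcongr
      exacts [hm (Set.mem_range_self n), hB (Set.mem_range_self n)]

theorem summable_of_succ_add_le_one_add_mul_add (hu : ∀ n, 0 ≤ u n) (hd : ∀ n, 0 ≤ d n)
    (hc : Summable c) (hb : Summable b)
    (hrec : ∀ n, u (n + 1) + d n ≤ (1 + c n) * u n + b n) : Summable d := by
  obtain ⟨M, hM⟩ := bddAbove_range_of_le_one_add_mul_add hu hc hb fun n ↦
    (le_add_of_nonneg_right (hd n)).trans (hrec n)
  have hu_below : BddBelow (Set.range u) := ⟨0, Set.forall_mem_range.2 hu⟩
  refine summable_of_le_sub_succ_add hd hu_below ((hc.abs.mul_right M).add hb) fun n ↦ ?_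
  have hcu : c n * u n ≤ |c n| * M :=
    mul_le_mul (le_abs_self _) (hM (Set.mem_range_self n)) (hu n) (abs_nonneg _)
  linarith [hrec n]

end RobbinsSiegmund

theorem stmt12_general {a σ θ : ℕ → ℝ} {α α₃ α₄ : ℝ} (ha : ∀ t, 0 ≤ a t) (hα : 0 < α)
    (hsum : Summable σ)
    (hrec : ∀ t, α * θ t ^ 2 * a t ≤ a t - a (t + 1) + σ t * (α₃ * a t + α₄)) :
    Summable (fun t ↦ θ t ^ 2 * a t) := by
  have hdecr_nonneg (t : ℕ) : 0 ≤ α * (θ t ^ 2 * a t) :=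
    mul_nonneg hα.le (mul_nonneg (sq_nonneg _) (ha t))
  have hdecr_summable : Summable fun t ↦ α * (θ t ^ 2 * a t) :=
    summable_of_succ_add_le_one_add_mul_add ha hdecr_nonneg (hsum.mul_left α₃)
      (hsum.mul_left α₄) fun t ↦ by linarith [hrec t]
  exact (summable_mul_left_iff hα.ne').1 hdecr_summable

/-- if `α θ_t² a_t ≤ a_t − a_{t+1} + σ_t(α₃ a_t + α₄)` with nonnegative
sequences, positive constants and `Σ σ_t < ∞`, then `Σ θ_t² a_t < ∞`. -/
theorem stmt12 (a σ θ : ℕ → ℝ) (ha : ∀ t, 0 ≤ a t) (hσ : ∀ t, 0 ≤ σ t)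
    (hθ : ∀ t, 0 ≤ θ t) (α α₃ α₄ : ℝ) (hα : 0 < α) (hα₃ : 0 < α₃) (hα₄ : 0 < α₄)
    (hsum : Summable σ)
    (hrec : ∀ t, α * θ t ^ 2 * a t ≤ a t - a (t+1) + σ t * (α₃ * a t + α₄)) :
    Summable (fun t => θ t ^ 2 * a t) :=
  stmt12_general ha hα hsum hrec
end

section
/- Let n ≥ 1 be an integer and let (e_t)_{t≥0} be a sequence of strictly positive reals such that lim_{t→∞} e_t / max{e_{t−1}, e_{t−2}, …, e_{t−n}} = 0. For k ≥ 0 define the per-pass maximum M_k = max{e_u : kn ≤ u ≤ kn + n − 1}. Then lim_{k→∞} M_{k+1}/M_k = 0. -/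
open Filter

/-! Suppose that from some time on each new term is, in absolute value, at most `δ ≤ 1` times the
absolute value of the maximum `S` of the `n` terms before it, and let `M` be the maximum of one
window of length `n`. Slide the window forward one step at a time. As long as the terms that have
entered are at most `|M|` in absolute value, so is the maximum `S` of the shifted window: from above
because the surviving old terms are at most `M`, from below because the last term that entered is at
least `-|M|`. Hence the next term is at most `δ * |M|` in absolute value, and after `n` steps so is
the maximum of the following window. -/

section LinearOrder

variable {α : Type*} [LinearOrder α] {n : ℕ}

/-- The maximum of `e` over the window `{t, …, t + n - 1}`. The `k`-th per-pass maximum is the value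
at `t = k * n`, and the maximum of the `n` terms preceding `e (t + n)` is the value at `t`. -/
def windowMax (hne : (Finset.range n).Nonempty) (e : ℕ → α) (t : ℕ) : α :=
  (Finset.range n).sup' hne fun u => e (t + u)

variable (hne : (Finset.range n).Nonempty) (e : ℕ → α) (t : ℕ)

theorem windowMax_le_iff {c : α} : windowMax hne e t ≤ c ↔ ∀ u < n, e (t + u) ≤ c := by
  simp only [windowMax, Finset.sup'_le_iff, Finset.mem_range]

theorem le_windowMax {u : ℕ} (hu : u < n) : e (t + u) ≤ windowMax hne e t :=
  (windowMax_le_iff hne e t).1 le_rfl u hu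

theorem exists_windowMax_eq : ∃ u < n, windowMax hne e t = e (t + u) := by
  obtain ⟨u, hu, heq⟩ := Finset.exists_mem_eq_sup' hne fun u => e (t + u)
  exact ⟨u, Finset.mem_range.1 hu, heq⟩

theorem sup'_range_sub_eq_windowMax :
    (Finset.range n).sup' hne (fun j => e (t + n - 1 - j)) = windowMax hne e t := by
  refine le_antisymm (Finset.sup'_le _ _ fun j hj => ?_)
    ((windowMax_le_iff hne e t).2 fun u hu => ?_)
  · have hj : j < n := Finset.mem_range.1 hj
    rw [show t + n - 1 - j = t + (n - 1 - j) by omega]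
    exact le_windowMax hne e t (by omega)
  · rw [show t + u = t + n - 1 - (n - 1 - u) by omega]
    exact Finset.le_sup' (fun j => e (t + n - 1 - j)) (Finset.mem_range.2 (by omega))

end LinearOrder

theorem abs_windowMax_add_le {G : Type*} [AddCommGroup G] [LinearOrder G] [IsOrderedAddMonoid G]
    {n : ℕ} (hne : (Finset.range n).Nonempty) {e : ℕ → G} {t u : ℕ}
    (hnew : ∀ v < u, |e (t + n + v)| ≤ |windowMax hne e t|) :
    |windowMax hne e (t + u)| ≤ |windowMax hne e t| := by
  have hn : 0 < n := Nat.pos_of_ne_zero (Finset.nonempty_range_iff.1 hne)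
  obtain rfl | hu := Nat.eq_zero_or_pos u
  · rfl
  refine abs_le.2 ⟨?lower, (windowMax_le_iff hne e _).2 fun j hj => ?upper⟩
  case lower =>
    calc -|windowMax hne e t| ≤ e (t + n + (u - 1)) := (abs_le.1 (hnew (u - 1) (by omega))).1
      _ = e (t + u + (n - 1)) := congrArg e (by omega)
      _ ≤ windowMax hne e (t + u) := le_windowMax hne e _ (by omega)
  case upper =>
    obtain hold | hentered := lt_or_ge (u + j) n
    · rw [add_assoc]
      exact (le_windowMax hne e t hold).trans (le_abs_self _)
    · rw [show t + u + j = t + n + (u + j - n) by omega]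
      exact (le_abs_self _).trans (hnew _ (by omega))

section OrderedRing

variable {R : Type*} [Ring R] [LinearOrder R] [IsOrderedRing R] {n : ℕ}
  (hne : (Finset.range n).Nonempty) {e : ℕ → R} {δ : R} {t : ℕ}

theorem abs_apply_le_mul_abs_windowMax (hδ₀ : 0 ≤ δ) (hδ₁ : δ ≤ 1)
    (h : ∀ u < n, |e (t + u + n)| ≤ δ * |windowMax hne e (t + u)|) :
    ∀ u < n, |e (t + n + u)| ≤ δ * |windowMax hne e t| := by
  intro u
  induction u using Nat.strong_induction_on with
  | _ u ih =>
    intro hu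
    have hentered : ∀ v < u, |e (t + n + v)| ≤ |windowMax hne e t| := fun v hv =>
      (ih v hv (hv.trans hu)).trans (mul_le_of_le_one_left (abs_nonneg _) hδ₁)
    calc |e (t + n + u)| = |e (t + u + n)| := by rw [add_right_comm]
      _ ≤ δ * |windowMax hne e (t + u)| := h u hu
      _ ≤ δ * |windowMax hne e t| :=
        mul_le_mul_of_nonneg_left (abs_windowMax_add_le hne hentered) hδ₀

theorem abs_windowMax_add_le_mul (hδ₀ : 0 ≤ δ) (hδ₁ : δ ≤ 1)
    (h : ∀ u < n, |e (t + u + n)| ≤ δ * |windowMax hne e (t + u)|) :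
    |windowMax hne e (t + n)| ≤ δ * |windowMax hne e t| := by
  obtain ⟨u, hu, heq⟩ := exists_windowMax_eq hne e (t + n)
  rw [heq]
  exact abs_apply_le_mul_abs_windowMax hne hδ₀ hδ₁ h u hu

end OrderedRing

theorem stmt18_general {K : Type*} [Field K] [LinearOrder K] [IsStrictOrderedRing K]
    [TopologicalSpace K] [OrderTopology K] {n : ℕ} (hne : (Finset.range n).Nonempty) {e : ℕ → K}
    (he : ∀ t, e t ≠ 0)
    (hlim : Tendsto (fun t => e (t + n) / windowMax hne e t) atTop (nhds 0)) :
    Tendsto (fun t => windowMax hne e (t + n) / windowMax hne e t) atTop (nhds 0) := by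
  have windowMax_ne_zero (t : ℕ) : windowMax hne e t ≠ 0 := by
    obtain ⟨u, -, heq⟩ := exists_windowMax_eq hne e t
    exact heq ▸ he (t + u)
  simp only [LinearOrderedAddCommGroup.tendsto_nhds, sub_zero, abs_div] at hlim ⊢
  intro ε hε
  obtain ⟨δ, hδ₀, hδ⟩ := exists_between (lt_min hε one_pos)
  obtain ⟨hδε, hδ₁⟩ := lt_min_iff.1 hδ
  obtain ⟨T, hT⟩ := eventually_atTop.1 (hlim δ hδ₀)
  filter_upwards [eventually_ge_atTop T] with t ht
  have hstep : ∀ u < n, |e (t + u + n)| ≤ δ * |windowMax hne e (t + u)| := fun u _ =>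
    ((div_lt_iff₀ (abs_pos.2 (windowMax_ne_zero _))).1 (hT (t + u) (by omega))).le
  have hcontract := abs_windowMax_add_le_mul hne hδ₀.le hδ₁.le hstep
  exact ((div_le_iff₀ (abs_pos.2 (windowMax_ne_zero t))).2 hcontract).trans_lt hδε

/-- if `e_t / max{e_{t−1}, …, e_{t−n}} → 0` (over `t ≥ n`), then the
per-pass maxima `M_k = max{e_u : kn ≤ u ≤ kn + n − 1}` satisfy `M_{k+1}/M_k → 0`. -/
theorem stmt18 (n : ℕ) (hn : 1 ≤ n) (e : ℕ → ℝ) (he : ∀ t, 0 < e t)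
    (hne : (Finset.range n).Nonempty)
    (hlim : Tendsto (fun t : ℕ =>
        e (t + n) / (Finset.range n).sup' hne (fun j => e (t + n - 1 - j)))
      atTop (nhds 0)) :
    Tendsto (fun k : ℕ =>
        ((Finset.range n).sup' hne (fun u => e ((k + 1) * n + u))) /
          ((Finset.range n).sup' hne (fun u => e (k * n + u))))
      atTop (nhds 0) := by
  simp only [sup'_range_sub_eq_windowMax] at hlim
  simp only [add_one_mul]
  exact (stmt18_general hne (fun t => (he t).ne') hlim).comp (tendsto_id.atTop_mul_const' hn)
end
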